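/- arXiv:1709.10337 — 3 statements merged into one kernel-verified Lean document; each statement's English description precedes it below -/
import Mathlib

section
/- Let gamma = (3 + sqrt 3)/6 and define R(x) = (1 + (1 - 2*gamma)*x + (gamma^2 - 2*gamma + 1/2)*x^2) / (1 - gamma*x)^2 for real x. Then R(x) tends to 1 - sqrt 3 as x → -∞, and 1 - sqrt 3 ≠ 0. -/
open Filter

/-!
Dividing numerator and denominator by `x ^ 2` writes the stability function as a rational
function of `x⁻¹` whose denominator at `0` is `γ ^ 2 ≠ 0`. Hence the limit at `-∞` is the quotient
`(γ ^ 2 - 2 γ + 1 / 2) / γ ^ 2` of the leading coefficients, which for `γ = (3 + √3) / 6` equals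
`-(1 + √3) / (2 + √3) = 1 - √3`.
-/

lemma tendsto_quadratic_div_sq_atBot (b c g : ℝ) (hg : g ≠ 0) :
    Tendsto (fun x : ℝ => (1 + b * x + c * x ^ 2) / (1 - g * x) ^ 2) atBot
      (nhds (c / g ^ 2)) := by
  have hcont : ContinuousAt (fun y : ℝ => (y ^ 2 + b * y + c) / (y - g) ^ 2) 0 := by
    apply ContinuousAt.div
    · fun_prop
    · fun_prop
    · simpa using hg
  have hlim := hcont.tendsto.comp (tendsto_inv_atBot_zero (𝕜 := ℝ))
  have hval : ((0 : ℝ) ^ 2 + b * 0 + c) / (0 - g) ^ 2 = c / g ^ 2 := by simp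
  rw [hval] at hlim
  refine hlim.congr' ?_
  filter_upwards [eventually_lt_atBot (0 : ℝ)] with x hx
  have hx0 : x ≠ 0 := hx.ne
  have hnum : x⁻¹ ^ 2 + b * x⁻¹ + c = (1 + b * x + c * x ^ 2) / x ^ 2 := by
    field_simp
  have hden : (x⁻¹ - g) ^ 2 = (1 - g * x) ^ 2 / x ^ 2 := by
    field_simp
  simp only [Function.comp_apply]
  rw [hnum, hden, div_div_div_cancel_right₀ (pow_ne_zero 2 hx0)]

/-- The SDIRK23 stability function (restricted to the real axis), with `γ = (3 + √3)/6`,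
tends to `1 - √3 ≠ 0` as `x → -∞`, so the SDIRK23 method is not L-stable. -/
theorem sdirk23_not_L_stable :
    Tendsto
      (fun x : ℝ =>
        (1 + (1 - 2 * ((3 + Real.sqrt 3) / 6)) * x +
            (((3 + Real.sqrt 3) / 6) ^ 2 - 2 * ((3 + Real.sqrt 3) / 6) + 1 / 2) * x ^ 2) /
          (1 - ((3 + Real.sqrt 3) / 6) * x) ^ 2)
      atBot (nhds (1 - Real.sqrt 3)) ∧
    1 - Real.sqrt 3 ≠ 0 := by
  have hs : Real.sqrt 3 ^ 2 = 3 := Real.sq_sqrt (by norm_num)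
  have hs0 : 0 ≤ Real.sqrt 3 := Real.sqrt_nonneg 3
  constructor
  · have hg : (3 + Real.sqrt 3) / 6 ≠ 0 := by positivity
    have hlim := tendsto_quadratic_div_sq_atBot (1 - 2 * ((3 + Real.sqrt 3) / 6))
      (((3 + Real.sqrt 3) / 6) ^ 2 - 2 * ((3 + Real.sqrt 3) / 6) + 1 / 2) _ hg
    convert hlim using 2
    rw [eq_div_iff (pow_ne_zero 2 hg)]
    -- The difference of the two sides is a multiple of `√3 ^ 2 - 3`.
    linear_combination (-(6 + Real.sqrt 3) / 36) * hs
  · intro h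
    nlinarith
end

section
/- Let s be a positive integer, A an invertible s×s real matrix, and b : Fin s → ℝ. For real x define, whenever the matrix (1 - x•A) is invertible, R(x) = 1 + x * (b ⬝ᵥ ((1 - x•A)⁻¹.mulVec (fun _ => 1))). Then (1 - x•A) is invertible for all x of sufficiently large absolute value, and R(x) tends to 1 - b ⬝ᵥ (A⁻¹.mulVec (fun _ => 1)) as x → -∞. In particular, if the method is stiffly accurate in the sense that bᵀ equals the last row of A (i.e. b j = A (s-1) j for all j), then R(x) → 0 as x → -∞. -/
/-!
For `x ≠ 0` one has `1 - x • A = x • (x⁻¹ • 1 - A)`, so everything is governed by the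
continuous family `y ↦ y • 1 - A` near `y = 0`, where it takes the invertible value `-A`.
Its determinant is nonzero near `0`, which gives invertibility of `1 - x • A` for large `|x|`;
its inverse is continuous at `0`, and `x • (1 - x • A)⁻¹ = (x⁻¹ • 1 - A)⁻¹` then tends to `-A⁻¹`.
For a stiffly accurate method `b = e_sᵀ A`, hence `bᵀ A⁻¹ 𝟙 = e_sᵀ 𝟙 = 1` and the limit is `0`.
-/

open Filter Matrix

/-- The stability function `R(x) = 1 + x bᵀ (I - xA)⁻¹ 𝟙` of an `s`-stage Runge–Kutta
method with coefficient matrix `A` and weights `b`. -/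
noncomputable def rkStabilityFunction {s : ℕ} (A : Matrix (Fin s) (Fin s) ℝ)
    (b : Fin s → ℝ) (x : ℝ) : ℝ :=
  1 + x * (b ⬝ᵥ ((1 - x • A)⁻¹.mulVec fun _ => 1))

theorem one_sub_smul_eq {s : ℕ} (A : Matrix (Fin s) (Fin s) ℝ) {x : ℝ} (hx : x ≠ 0) :
    1 - x • A = x • (x⁻¹ • (1 : Matrix (Fin s) (Fin s) ℝ) - A) := by
  rw [smul_sub, smul_smul, mul_inv_cancel₀ hx, one_smul]

theorem continuous_smul_one_sub {s : ℕ} (A : Matrix (Fin s) (Fin s) ℝ) :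
    Continuous fun y : ℝ => y • (1 : Matrix (Fin s) (Fin s) ℝ) - A := by
  fun_prop

theorem det_neg_ne_zero {s : ℕ} {A : Matrix (Fin s) (Fin s) ℝ} (hA : IsUnit A) :
    (-A).det ≠ 0 :=
  ((Matrix.isUnit_iff_isUnit_det _).1 hA.neg).ne_zero

theorem eventually_det_ne_zero {s : ℕ} {A : Matrix (Fin s) (Fin s) ℝ} (hA : IsUnit A) :
    ∀ᶠ y : ℝ in nhds 0, (y • (1 : Matrix (Fin s) (Fin s) ℝ) - A).det ≠ 0 := by
  refine (continuous_smul_one_sub A).matrix_det.continuousAt.eventually_ne ?_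
  simpa using det_neg_ne_zero hA

theorem isUnit_one_sub_smul {s : ℕ} {A : Matrix (Fin s) (Fin s) ℝ} {x : ℝ} (hx : x ≠ 0)
    (h : (x⁻¹ • (1 : Matrix (Fin s) (Fin s) ℝ) - A).det ≠ 0) :
    IsUnit ((1 : Matrix (Fin s) (Fin s) ℝ) - x • A) := by
  rw [one_sub_smul_eq A hx, Matrix.isUnit_iff_isUnit_det, Matrix.det_smul]
  exact (mul_ne_zero (pow_ne_zero _ hx) h).isUnit

theorem tendsto_inv_smul_one_sub {s : ℕ} {A : Matrix (Fin s) (Fin s) ℝ} (hA : IsUnit A) :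
    Tendsto (fun y : ℝ => (y • (1 : Matrix (Fin s) (Fin s) ℝ) - A)⁻¹) (nhds 0)
      (nhds (-A⁻¹)) := by
  have hinv : (-A)⁻¹ = -A⁻¹ := by
    refine Matrix.inv_eq_right_inv ?_
    rw [neg_mul_neg, Matrix.mul_nonsing_inv _ ((Matrix.isUnit_iff_isUnit_det _).1 hA)]
  have hc := continuous_smul_one_sub A
  have h1 : ContinuousAt (fun y : ℝ => (y • (1 : Matrix (Fin s) (Fin s) ℝ) - A).det⁻¹ •
      (y • (1 : Matrix (Fin s) (Fin s) ℝ) - A).adjugate) 0 := by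
    refine (hc.matrix_det.continuousAt.inv₀ ?_).smul hc.matrix_adjugate.continuousAt
    simpa using det_neg_ne_zero hA
  have h2 := h1.tendsto
  simp only [← Ring.inverse_eq_inv', ← Matrix.inv_def] at h2
  simpa [hinv] using h2

theorem rkStabilityFunction_eq {s : ℕ} (A : Matrix (Fin s) (Fin s) ℝ) (b : Fin s → ℝ)
    {x : ℝ} (hx : x ≠ 0) (h : (x⁻¹ • (1 : Matrix (Fin s) (Fin s) ℝ) - A).det ≠ 0) :
    rkStabilityFunction A b x =
      1 + b ⬝ᵥ ((x⁻¹ • (1 : Matrix (Fin s) (Fin s) ℝ) - A)⁻¹.mulVec fun _ => 1) := by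
  have hinv : (x • (x⁻¹ • (1 : Matrix (Fin s) (Fin s) ℝ) - A))⁻¹ =
      x⁻¹ • (x⁻¹ • (1 : Matrix (Fin s) (Fin s) ℝ) - A)⁻¹ := by
    refine Matrix.inv_eq_right_inv ?_
    rw [smul_mul_smul_comm, mul_inv_cancel₀ hx, one_smul, Matrix.mul_nonsing_inv _ h.isUnit]
  rw [rkStabilityFunction, one_sub_smul_eq A hx, hinv, Matrix.smul_mulVec, dotProduct_smul,
    smul_eq_mul, mul_inv_cancel_left₀ hx]

theorem tendsto_rkStabilityFunction {s : ℕ} {A : Matrix (Fin s) (Fin s) ℝ} (hA : IsUnit A)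
    (b : Fin s → ℝ) :
    Tendsto (rkStabilityFunction A b) atBot
      (nhds (1 - b ⬝ᵥ (A⁻¹.mulVec fun _ => 1))) := by
  have hinv : Tendsto (fun x : ℝ => x⁻¹) atBot (nhds 0) := tendsto_inv_atBot_zero
  have hc : Continuous fun B : Matrix (Fin s) (Fin s) ℝ =>
      1 + b ⬝ᵥ (B.mulVec fun _ => (1 : ℝ)) :=
    continuous_const.add
      (continuous_const.dotProduct (continuous_id.matrix_mulVec continuous_const))
  have h := (hc.tendsto (-A⁻¹)).comp ((tendsto_inv_smul_one_sub hA).comp hinv)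
  rw [Matrix.neg_mulVec, dotProduct_neg, ← sub_eq_add_neg] at h
  refine h.congr' ?_
  filter_upwards [hinv.eventually (eventually_det_ne_zero hA), eventually_lt_atBot 0]
    with x hdet hx
  exact (rkStabilityFunction_eq A b hx.ne hdet).symm

/-- For an `s`-stage Runge–Kutta method with invertible coefficient matrix `A`,
`I - xA` is invertible for all `x` of sufficiently large absolute value, the stability
function tends to `1 - bᵀ A⁻¹ 𝟙` as `x → -∞`, and if the method is stiffly accurate
(`b` equals the last row of `A`) then the stability function tends to `0` as `x → -∞`. -/
theorem rkStabilityFunction_atBot (s : ℕ) (hs : 0 < s)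
    (A : Matrix (Fin s) (Fin s) ℝ) (hA : IsUnit A) (b : Fin s → ℝ) :
    (∃ M : ℝ, ∀ x : ℝ, M ≤ |x| → IsUnit ((1 : Matrix (Fin s) (Fin s) ℝ) - x • A)) ∧
    Tendsto (rkStabilityFunction A b) atBot
      (nhds (1 - b ⬝ᵥ (A⁻¹.mulVec fun _ => 1))) ∧
    ((∀ j : Fin s, b j = A ⟨s - 1, Nat.sub_lt hs Nat.one_pos⟩ j) →
      Tendsto (rkStabilityFunction A b) atBot (nhds 0)) := by
  refine ⟨?_, tendsto_rkStabilityFunction hA b, fun hb => ?_⟩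
  · obtain ⟨ε, hε, hball⟩ := Metric.eventually_nhds_iff.1 (eventually_det_ne_zero hA)
    -- `|x| ≥ ε⁻¹ + 1` forces `|x⁻¹| < ε`.
    refine ⟨ε⁻¹ + 1, fun x hx => ?_⟩
    have hεx : ε⁻¹ < |x| := by linarith
    have hx0 : x ≠ 0 := abs_pos.1 ((inv_pos.2 hε).trans hεx)
    refine isUnit_one_sub_smul hx0 (hball ?_)
    rw [dist_zero_right, norm_inv, Real.norm_eq_abs]
    exact inv_lt_of_inv_lt₀ hε hεx
  · have hone : b ⬝ᵥ (A⁻¹.mulVec fun _ => 1) = 1 := by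
      have hrow : b ⬝ᵥ (A⁻¹.mulVec fun _ => 1) =
          (A.mulVec (A⁻¹.mulVec fun _ => 1)) ⟨s - 1, Nat.sub_lt hs Nat.one_pos⟩ := by
        rw [funext hb]; rfl
      rw [hrow, Matrix.mulVec_mulVec,
        Matrix.mul_nonsing_inv _ ((Matrix.isUnit_iff_isUnit_det _).1 hA), Matrix.one_mulVec]
    simpa [hone] using tendsto_rkStabilityFunction hA b
end

section
/- Let A be the 5×5 real lower-triangular matrix with diagonal entries all equal to 1/4 and strictly lower entries A(2,1) = 1/2; A(3,1) = 17/50, A(3,2) = -1/25; A(4,1) = 371/1360, A(4,2) = -137/2720, A(4,3) = 15/544; A(5,1) = 25/24, A(5,2) = -49/48, A(5,3) = 125/16, A(5,4) = -85/12 (all other off-diagonal entries zero), and let b = (25/24, -49/48, 125/16, -85/12, 1/4) be its last row. Define, for real x with (1 - x•A) invertible, R(x) = 1 + x * (b ⬝ᵥ ((1 - x•A)⁻¹.mulVec (fun _ => 1))). Then R(x) tends to 0 as x → -∞. -/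
/-!
Stiff accuracy means that `b` is the last row of `A`. Hence, if `v` solves
`(I - xA) v = 𝟙`, the last component of this system reads `v₄ - x bᵀv = 1`, that is, `R(x) = v₄`.
For `x ≠ 0` one has `v = x⁻¹ (x⁻¹ I - A)⁻¹ 𝟙`. Since `A` is invertible, matrix inversion is
continuous at `-A`, so `(x⁻¹ I - A)⁻¹ 𝟙 → (-A)⁻¹ 𝟙` as `x → -∞`, and the factor `x⁻¹` sends `v` to
zero.
-/

open Filter Matrix

/-- The Butcher matrix of the five-stage fourth-order SDIRK54 scheme of Hairer–Wanner. -/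
noncomputable def sdirk54A : Matrix (Fin 5) (Fin 5) ℝ :=
  !![1/4,       0,         0,      0,      0;
     1/2,       1/4,       0,      0,      0;
     17/50,     -1/25,     1/4,    0,      0;
     371/1360,  -137/2720, 15/544, 1/4,    0;
     25/24,     -49/48,    125/16, -85/12, 1/4]

/-- The weight vector of the SDIRK54 scheme (equal to the last row of the Butcher matrix,
so the method is stiffly accurate). -/
noncomputable def sdirk54b : Fin 5 → ℝ :=
  ![25/24, -49/48, 125/16, -85/12, 1/4]

lemma sdirk54_det_sub (t : ℝ) : (t • (1 : Matrix (Fin 5) (Fin 5) ℝ) - sdirk54A).det =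
    (t - 1 / 4) ^ 5 := by
  rw [det_of_isLowerTriangular]
  · simp [sdirk54A, Fin.prod_univ_five]
    ring
  · intro i j h
    -- The lower-triangular predicate compares indices in the order dual, so `h` says `i < j`.
    replace h : i < j := h
    fin_cases i <;> fin_cases j <;> simp [sdirk54A] at h ⊢

/-- Stiff accuracy identifies the stability function with the last stage value. -/
lemma sdirk54_stability_eq_last_stage {x : ℝ} (hx : x < 0) :
    1 + x * (sdirk54b ⬝ᵥ ((1 - x • sdirk54A)⁻¹.mulVec fun _ => 1)) =
      x⁻¹ * ((x⁻¹ • (1 : Matrix (Fin 5) (Fin 5) ℝ) - sdirk54A)⁻¹.mulVec fun _ => 1) 4 := by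
  set N := x⁻¹ • (1 : Matrix (Fin 5) (Fin 5) ℝ) - sdirk54A with hN
  have hx0 : x ≠ 0 := hx.ne
  have hdet : IsUnit N.det := by
    rw [hN, sdirk54_det_sub, isUnit_iff_ne_zero]
    have := inv_lt_zero.mpr hx
    exact pow_ne_zero _ (by linarith)
  have hM : 1 - x • sdirk54A = x • N := by
    rw [hN, smul_sub, smul_smul, mul_inv_cancel₀ hx0, one_smul]
  have hinv : (x • N)⁻¹ = x⁻¹ • N⁻¹ := by
    apply inv_eq_left_inv
    rw [smul_mul_smul_comm, inv_mul_cancel₀ hx0, nonsing_inv_mul _ hdet, one_smul]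
  set w : Fin 5 → ℝ := N⁻¹.mulVec fun _ => 1 with hw
  have hNw : N.mulVec w = fun _ => 1 := by
    rw [hw, mulVec_mulVec, mul_nonsing_inv _ hdet, one_mulVec]
  have hb : sdirk54b = sdirk54A 4 := by
    ext j
    fin_cases j <;> simp [sdirk54A, sdirk54b]
  have h4 : x⁻¹ * w 4 - sdirk54A 4 ⬝ᵥ w = 1 := by
    have := congrFun hNw 4
    rwa [hN, sub_mulVec, smul_mulVec, one_mulVec] at this
  rw [hM, hinv, smul_mulVec, ← hw, hb, dotProduct_smul, smul_eq_mul, mul_inv_cancel_left₀ hx0]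
  linarith

/-- L-stability limit of the SDIRK54 scheme: its stability function
`R(x) = 1 + x bᵀ (I - xA)⁻¹ 𝟙` tends to `0` as `x → -∞`. -/
theorem sdirk54_stability_function_tendsto_zero :
    Tendsto
      (fun x : ℝ => 1 + x * (sdirk54b ⬝ᵥ ((1 - x • sdirk54A)⁻¹.mulVec fun _ => 1)))
      atBot (nhds 0) := by
  have hcont : ContinuousAt (fun t : ℝ =>
      t * ((t • (1 : Matrix (Fin 5) (Fin 5) ℝ) - sdirk54A)⁻¹.mulVec fun _ => 1) 4) 0 := by
    -- Cramer's rule exhibits the inverse as a rational function whose denominator `(t - 1/4)⁵`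
    -- does not vanish at `t = 0`.
    simp only [inv_def, sdirk54_det_sub, Ring.inverse_eq_inv', smul_mulVec, Pi.smul_apply,
      smul_eq_mul]
    refine continuousAt_id.mul (ContinuousAt.mul ?_ (Continuous.continuousAt ?_))
    · exact ContinuousAt.inv₀ (by fun_prop) (by norm_num)
    · have hadj : Continuous fun t : ℝ =>
          (t • (1 : Matrix (Fin 5) (Fin 5) ℝ) - sdirk54A).adjugate :=
        Continuous.matrix_adjugate (by fun_prop)
      exact (continuous_apply 4).comp (hadj.matrix_mulVec continuous_const)
  have hlim := hcont.tendsto.comp tendsto_inv_atBot_zero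
  rw [zero_mul] at hlim
  refine hlim.congr' ?_
  filter_upwards [eventually_lt_atBot 0] with x hx
  exact (sdirk54_stability_eq_last_stage hx).symm
end
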